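/- Let w be the unique radial positive solution of Δw − w + w³ = 0 in ℝ², let h ∈ C²(ℝ²) be homogeneous of degree p ≥ 2 with H(y) = ∫h(x+y)w² having a unique critical point y₀, and let ψ₁ ∈ C²(ℝ²)∩L^∞(ℝ²) be the unique solution of ∇ψ₁(0) = 0 and (−Δ + 1 − 3w²)ψ₁ = −2w³/∫w⁴ − 2h(x+y₀)w/(p∫h(x+y₀)w²) in ℝ². Then ∫_{ℝ²} w³ψ₁ = (p+1)/p. -/

import Mathlib

noncomputable section
open MeasureTheory Filter Real Set
open scoped RealInnerProductSpace Topology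

abbrev R2 : Type := EuclideanSpace ℝ (Fin 2)

/-- The Laplacian of `f : ℝ² → ℝ`. -/
def lap (f : R2 → ℝ) (x : R2) : ℝ :=
  ∑ i : Fin 2, fderiv ℝ (fun y => fderiv ℝ f y (EuclideanSpace.single i 1)) x
    (EuclideanSpace.single i 1)

/-- The linearized operator `L = -Δ + (1 - 3 w²)` applied to `f`. -/
def Lop (w f : R2 → ℝ) (x : R2) : ℝ := -lap f x + (1 - 3 * (w x) ^ 2) * f x

/-- `x · ∇f`. -/
def xgrad (f : R2 → ℝ) (x : R2) : ℝ := ⟪x, gradient f x⟫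

/-- First partial derivative `∂f/∂x₁`. -/
def pd1 (f : R2 → ℝ) (x : R2) : ℝ := fderiv ℝ f x (EuclideanSpace.single 0 1)

/-- `w` is the (radial positive) ground state of `Δw - w + w³ = 0` in `ℝ²`, `w ∈ H¹`. -/
structure IsGroundState (w : R2 → ℝ) : Prop where
  smooth : ContDiff ℝ 2 w
  pos : ∀ x, 0 < w x
  radial : ∀ x y : R2, ‖x‖ = ‖y‖ → w x = w y
  eqn : ∀ x, lap w x - w x + (w x) ^ 3 = 0
  sqInt : Integrable fun x => (w x) ^ 2
  quarticInt : Integrable fun x => (w x) ^ 4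
  gradSqInt : Integrable fun x => ‖gradient w x‖ ^ 2

/-- `h` is homogeneous of degree `p`. -/
def Homog (h : R2 → ℝ) (p : ℝ) : Prop :=
  ∀ t : ℝ, 0 < t → ∀ x : R2, h (t • x) = t ^ p * h x

/-- `H(y) = ∫ h(x+y) w(x)² dx`. -/
def Hfun (h w : R2 → ℝ) (y : R2) : ℝ := ∫ x, h (x + y) * (w x) ^ 2

/-- Determinant of the Hessian of `H` at `y`. -/
def hessDet (H : R2 → ℝ) (y : R2) : ℝ :=
  (fderiv ℝ (fun z => fderiv ℝ H z (EuclideanSpace.single 0 1)) y (EuclideanSpace.single 0 1)) *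
    (fderiv ℝ (fun z => fderiv ℝ H z (EuclideanSpace.single 1 1)) y (EuclideanSpace.single 1 1)) -
  (fderiv ℝ (fun z => fderiv ℝ H z (EuclideanSpace.single 0 1)) y (EuclideanSpace.single 1 1)) *
    (fderiv ℝ (fun z => fderiv ℝ H z (EuclideanSpace.single 1 1)) y (EuclideanSpace.single 0 1))

/-- The Gross–Pitaevskii energy functional. -/
def GPe (V : R2 → ℝ) (a : ℝ) (u : R2 → ℝ) : ℝ :=
  (∫ x, ‖gradient u x‖ ^ 2) + (∫ x, V x * (u x) ^ 2) - a / 2 * ∫ x, (u x) ^ 4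

/-- Admissible class: `u ∈ H¹`, `∫ V u² < ∞`, `‖u‖₂ = 1`. -/
def Admissible (V : R2 → ℝ) (u : R2 → ℝ) : Prop :=
  Integrable (fun x => (u x) ^ 2) ∧ Integrable (fun x => ‖gradient u x‖ ^ 2) ∧
    Integrable (fun x => V x * (u x) ^ 2) ∧ (∫ x, (u x) ^ 2) = 1

/-- `e(a)`, the ground state energy. -/
def gpInf (V : R2 → ℝ) (a : ℝ) : ℝ := sInf (GPe V a '' {u | Admissible V u})

/-- `u` is a positive minimizer of `e(a)`. -/
def IsPosMinimizer (V : R2 → ℝ) (a : ℝ) (u : R2 → ℝ) : Prop :=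
  Admissible V u ∧ GPe V a u = gpInf V a ∧ ∀ x, 0 < u x

/-- `x0` is the unique maximum point of `u`. -/
def IsUniqueMaxPt (u : R2 → ℝ) (x0 : R2) : Prop :=
  IsMaxOn u univ x0 ∧ ∀ z, IsMaxOn u univ z → z = x0

/-- The Lagrange multiplier `μ_a = e(a) - (a/2)∫u⁴`. -/
def lagrangeMul (V : R2 → ℝ) (a : ℝ) (u : R2 → ℝ) : ℝ :=
  gpInf V a - a / 2 * ∫ x, (u x) ^ 4

/-- A bounded function on `ℝ²`. -/
def BddFun (f : R2 → ℝ) : Prop := ∃ M, ∀ x, |f x| ≤ M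

set_option maxHeartbeats 400000 in
lemma aux_weight (w h : R2 → ℝ) (p : ℝ) (hp : 2 ≤ p) (y1 x0 : R2)
    (hwc : Continuous w) (hrad : ∀ x y : R2, ‖x‖ = ‖y‖ → w x = w y)
    (hc : Continuous h) (hnonneg : ∀ x, 0 ≤ h x) (hhom : Homog h p)
    (hx0 : h x0 ≠ 0) (hI : Integrable fun x => h (x + y1) * (w x) ^ 2) :
    Integrable fun x : R2 => ‖x‖ ^ p * (w x) ^ 2 := by
  have hp0 : 0 < p := by linarith
  have h0 : h 0 = 0 := by
    have h1 := hhom 2 (by norm_num) 0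
    rw [smul_zero] at h1
    have h2 : (1:ℝ) < 2 ^ p := Real.one_lt_rpow (by norm_num) hp0
    nlinarith
  have hx0n : x0 ≠ 0 := by rintro rfl; exact hx0 h0
  have hx0p : 0 < ‖x0‖ := norm_pos_iff.mpr hx0n
  set θ0 : R2 := ‖x0‖⁻¹ • x0 with hθ0
  have hθ0n : ‖θ0‖ = 1 := by
    rw [hθ0, norm_smul, norm_inv, norm_norm, inv_mul_cancel₀ hx0p.ne']
  have hθ0pos : 0 < h θ0 := by
    rw [hθ0, hhom _ (inv_pos.mpr hx0p)]
    exact mul_pos (Real.rpow_pos_of_pos (inv_pos.mpr hx0p) _)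
      (lt_of_le_of_ne (hnonneg _) (Ne.symm hx0))
  obtain ⟨δ, hδ, hball⟩ : ∃ δ > 0, ∀ x, dist x θ0 < δ → h θ0 / 2 < h x := by
    have : ∀ᶠ x in 𝓝 θ0, h θ0 / 2 < h x :=
      (hc.tendsto θ0).eventually (lt_mem_nhds (by linarith))
    exact Metric.eventually_nhds_iff.mp this
  set ρ : ℝ := 2 * ‖y1‖ / δ + 1 with hρ
  have hρ1 : 1 ≤ ρ := by
    have : 0 ≤ 2 * ‖y1‖ / δ := by positivity
    linarith
  have hfc : Continuous fun x : R2 => ‖x‖ ^ p * (w x) ^ 2 :=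
    (continuous_norm.rpow_const (fun _ => Or.inr hp0.le)).mul (hwc.pow 2)
  have hmeas : Measurable fun x : R2 => ‖x‖⁻¹ • x := by fun_prop
  have key : IntegrableOn (fun x : R2 => ‖x‖ ^ p * (w x) ^ 2)
      {x | ρ ≤ ‖x‖ ∧ ‖x‖⁻¹ • x ∈ Metric.sphere (0 : R2) 1} := by
    refine (isCompact_sphere (0 : R2) 1).induction_on
      (p := fun S => IntegrableOn (fun x : R2 => ‖x‖ ^ p * (w x) ^ 2)
        {x | ρ ≤ ‖x‖ ∧ ‖x‖⁻¹ • x ∈ S}) ?_ ?_ ?_ ?_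
    · simp
    · intro s t hst ht
      exact ht.mono_set (fun x hx => ⟨hx.1, hst hx.2⟩)
    · intro s t hs ht
      refine (hs.union ht).mono_set ?_
      rintro x ⟨hx, hx2 | hx2⟩
      · exact Or.inl ⟨hx, hx2⟩
      · exact Or.inr ⟨hx, hx2⟩
    · intro θ hθ
      have hθn : ‖θ‖ = 1 := by simpa using hθ
      refine ⟨Metric.ball θ (δ / 2), mem_nhdsWithin_of_mem_nhds (Metric.ball_mem_nhds _ (by positivity)), ?_⟩
      obtain ⟨A, hA⟩ : ∃ A : R2 ≃ₗᵢ[ℝ] R2, A θ = θ0 :=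
        ⟨_, Submodule.reflection_sub (hθn.trans hθ0n.symm)⟩
      have hIA : Integrable fun x => h (A x + y1) * (w x) ^ 2 := by
        have := (A.measurePreserving.integrable_comp_emb
          A.toHomeomorph.measurableEmbedding).mpr hI
        refine this.congr (Eventually.of_forall fun x => ?_)
        simp only [Function.comp]
        rw [hrad (A x) x (A.norm_map x)]
      have hIB : IntegrableOn (fun x => 2 / h θ0 * (h (A x + y1) * (w x) ^ 2))
          {x | ρ ≤ ‖x‖ ∧ ‖x‖⁻¹ • x ∈ Metric.ball θ (δ / 2)} :=
        (hIA.const_mul (2 / h θ0)).integrableOn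
      refine Integrable.mono' hIB hfc.aestronglyMeasurable ?_
      refine ae_restrict_of_forall_mem ?_ ?_
      · have m1 : MeasurableSet {x : R2 | ρ ≤ ‖x‖} := measurableSet_le measurable_const measurable_norm
        have m2 : MeasurableSet ((fun x : R2 => ‖x‖⁻¹ • x) ⁻¹' Metric.ball θ (δ / 2)) :=
          measurableSet_preimage hmeas measurableSet_ball
        exact m1.inter m2
      · rintro x ⟨hx1, hx2⟩
        have hxp : 0 < ‖x‖ := by linarith
        have hd : dist (A (‖x‖⁻¹ • x) + ‖x‖⁻¹ • y1) θ0 < δ := by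
          have h1 : dist (A (‖x‖⁻¹ • x)) θ0 < δ / 2 := by
            rw [← hA, A.dist_map]; exact hx2
          have h2 : ‖‖x‖⁻¹ • y1‖ < δ / 2 := by
            rw [norm_smul, norm_inv, norm_norm, inv_mul_lt_iff₀ hxp]
            have : ρ * (δ / 2) ≤ ‖x‖ * (δ / 2) := by gcongr
            have h3 : ρ * (δ / 2) = ‖y1‖ + δ / 2 := by rw [hρ]; field_simp
            linarith
          calc dist (A (‖x‖⁻¹ • x) + ‖x‖⁻¹ • y1) θ0
              = ‖(A (‖x‖⁻¹ • x) - θ0) + ‖x‖⁻¹ • y1‖ := by rw [dist_eq_norm]; congr 1; abel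
            _ ≤ ‖A (‖x‖⁻¹ • x) - θ0‖ + ‖‖x‖⁻¹ • y1‖ := norm_add_le _ _
            _ < δ := by rw [← dist_eq_norm]; linarith
        have hb := hball _ hd
        have he : A x + y1 = ‖x‖ • (A (‖x‖⁻¹ • x) + ‖x‖⁻¹ • y1) := by
          rw [map_smul, ← smul_add, smul_smul, mul_inv_cancel₀ hxp.ne', one_smul]
        rw [he, hhom _ hxp, Real.norm_of_nonneg (by positivity)]
        have hq : 1 ≤ 2 / h θ0 * h (A (‖x‖⁻¹ • x) + ‖x‖⁻¹ • y1) := by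
          rw [div_mul_eq_mul_div, le_div_iff₀ hθ0pos]; linarith
        have hnn : 0 ≤ ‖x‖ ^ p * w x ^ 2 := by positivity
        nlinarith
  have key2 : IntegrableOn (fun x : R2 => ‖x‖ ^ p * (w x) ^ 2) (Metric.closedBall 0 ρ) :=
    hfc.continuousOn.integrableOn_compact (isCompact_closedBall _ _)
  rw [← integrableOn_univ]
  refine (key.union key2).mono_set ?_
  intro x _
  rcases le_total ρ ‖x‖ with hx | hx
  · left
    refine ⟨hx, ?_⟩
    have : ‖x‖ ≠ 0 := by linarith
    simp [norm_smul, this]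
  · right; simpa using hx

lemma aux_int (w h : R2 → ℝ) (p : ℝ) (hp : 2 ≤ p) (y : R2)
    (hwc : Continuous w) (hw2 : Integrable fun x => (w x) ^ 2)
    (hc : Continuous h) (hnonneg : ∀ x, 0 ≤ h x) (hhom : Homog h p)
    (hI : Integrable fun x : R2 => ‖x‖ ^ p * (w x) ^ 2) :
    Integrable fun x => h (x + y) * (w x) ^ 2 := by
  have hp0 : 0 < p := by linarith
  obtain ⟨C, hC⟩ := (isCompact_closedBall (0 : R2) 1).bddAbove_image hc.continuousOn
  have hC' : ∀ x : R2, ‖x‖ ≤ 1 → h x ≤ C := fun x hx =>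
    hC ⟨x, by simpa using hx, rfl⟩
  have hC0 : 0 ≤ C := (hnonneg 0).trans (hC' 0 (by simp))
  have hbd : ∀ x : R2, h x ≤ C * ‖x‖ ^ p := by
    intro x
    rcases eq_or_ne x 0 with rfl | hx
    · have h1 := hhom 2 (by norm_num) 0
      rw [smul_zero] at h1
      have h2 : (1:ℝ) < 2 ^ p := Real.one_lt_rpow (by norm_num) hp0
      have : h 0 = 0 := by nlinarith
      rw [this]; positivity
    · have hxp : 0 < ‖x‖ := norm_pos_iff.mpr hx
      have he : x = ‖x‖ • (‖x‖⁻¹ • x) := by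
        rw [smul_smul, mul_inv_cancel₀ hxp.ne', one_smul]
      have h1 : h x = ‖x‖ ^ p * h (‖x‖⁻¹ • x) := by
        conv_lhs => rw [he]
        exact hhom _ hxp _
      rw [h1, mul_comm]
      gcongr
      apply hC'
      rw [norm_smul, norm_inv, norm_norm, inv_mul_cancel₀ hxp.ne']
  refine Integrable.mono' (((hI.add (hw2.const_mul (‖y‖ ^ p))).const_mul (C * 2 ^ p)))
    (by fun_prop) (Eventually.of_forall fun x => ?_)
  rw [Real.norm_of_nonneg (mul_nonneg (hnonneg _) (sq_nonneg _))]
  have h3 : ‖x + y‖ ^ p ≤ 2 ^ p * (‖x‖ ^ p + ‖y‖ ^ p) := by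
    have ha : 0 ≤ ‖x‖ ^ p := by positivity
    have hb : 0 ≤ ‖y‖ ^ p := by positivity
    calc ‖x + y‖ ^ p ≤ (2 * max ‖x‖ ‖y‖) ^ p := by
          gcongr
          linarith [norm_add_le x y, le_max_left ‖x‖ ‖y‖, le_max_right ‖x‖ ‖y‖]
      _ = 2 ^ p * (max ‖x‖ ‖y‖) ^ p := Real.mul_rpow (by norm_num) (by positivity)
      _ ≤ _ := by
          gcongr
          rcases max_cases ‖x‖ ‖y‖ with ⟨h, _⟩ | ⟨h, _⟩ <;> rw [h] <;> linarith
  calc h (x + y) * w x ^ 2 ≤ (C * (2 ^ p * (‖x‖ ^ p + ‖y‖ ^ p))) * w x ^ 2 := by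
        gcongr
        exact (hbd _).trans (by gcongr)
    _ = _ := by simp only [Pi.add_apply]; ring

lemma aux_H (w h : R2 → ℝ) (p : ℝ) (y0 : R2)
    (hw : IsGroundState w) (hp : 2 ≤ p) (hc : Continuous h)
    (hnonneg : ∀ x, 0 ≤ h x) (hhom : Homog h p)
    (huniq : ∀ y, gradient (Hfun h w) y = 0 → y = y0) :
    Integrable (fun x => h (x + y0) * (w x) ^ 2) ∧ Hfun h w y0 ≠ 0 := by
  have hne : ∃ y1, Hfun h w y1 ≠ 0 := by
    by_contra hcon
    push Not at hcon
    have hz : Hfun h w = fun _ => 0 := funext hcon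
    obtain ⟨y, hy⟩ := exists_ne y0
    apply hy
    apply huniq
    rw [hz]
    simp [gradient]
  obtain ⟨y1, hy1⟩ := hne
  have hwc := hw.smooth.continuous
  have hx0 : ∃ x0, h x0 ≠ 0 := by
    by_contra hcon
    push Not at hcon
    apply hy1
    simp [Hfun, hcon]
  obtain ⟨x0, hx0⟩ := hx0
  have hI1 : Integrable (fun x => h (x + y1) * (w x) ^ 2) := by
    by_contra hcon
    exact hy1 (integral_undef hcon)
  have hI0 := aux_int w h p hp y0 hwc hw.sqInt hc hnonneg hhom
    (aux_weight w h p hp y1 x0 hwc hw.radial hc hnonneg hhom hx0 hI1)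
  refine ⟨hI0, ne_of_gt ?_⟩
  refine integral_pos_of_integrable_nonneg_nonzero (x := x0 - y0) (by fun_prop) hI0
    (fun x => mul_nonneg (hnonneg _) (sq_nonneg _)) ?_
  simp only [sub_add_cancel]
  exact mul_ne_zero hx0 (pow_ne_zero _ (hw.pos _).ne')

/-- directional derivative -/
def Dd (i : Fin 2) (f : R2 → ℝ) (x : R2) : ℝ := fderiv ℝ f x (EuclideanSpace.single i 1)

lemma lap_eq (f : R2 → ℝ) (x : R2) : lap f x = Dd 0 (Dd 0 f) x + Dd 1 (Dd 1 f) x := by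
  simp [lap, Dd, Fin.sum_univ_two]; rfl

lemma Dd_contDiff {f : R2 → ℝ} (hf : ContDiff ℝ 2 f) (i : Fin 2) : ContDiff ℝ 1 (Dd i f) := by
  unfold Dd
  exact (hf.fderiv_right (m := 1) (by norm_num)).clm_apply contDiff_const

lemma Dd_cont {f : R2 → ℝ} (hf : ContDiff ℝ 1 f) (i : Fin 2) : Continuous (Dd i f) := by
  unfold Dd
  exact (hf.continuous_fderiv (by norm_num)).clm_apply continuous_const

lemma Dd_supp {f : R2 → ℝ} (hf : HasCompactSupport f) (i : Fin 2) : HasCompactSupport (Dd i f) :=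
  hf.fderiv_apply (𝕜 := ℝ) _

lemma green1 {u v : R2 → ℝ} (hu : ContDiff ℝ 1 u) (hv : ContDiff ℝ 1 v)
    (hs : HasCompactSupport u ∨ HasCompactSupport v) (i : Fin 2) :
    ∫ x, u x * Dd i v x = - ∫ x, Dd i u x * v x := by
  have cu := hu.continuous
  have cv := hv.continuous
  have cu' := Dd_cont hu i
  have cv' := Dd_cont hv i
  have h1 : HasCompactSupport fun x => Dd i u x * v x := by
    rcases hs with hs | hs
    · exact (Dd_supp hs i).mul_right
    · exact hs.mul_left
  have h2 : HasCompactSupport fun x => u x * Dd i v x := by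
    rcases hs with hs | hs
    · exact hs.mul_right
    · exact (Dd_supp hs i).mul_left
  have h3 : HasCompactSupport fun x => u x * v x := by
    rcases hs with hs | hs
    · exact hs.mul_right
    · exact hs.mul_left
  exact integral_mul_fderiv_eq_neg_fderiv_mul_of_integrable
    ((cu'.mul cv).integrable_of_hasCompactSupport h1)
    ((cu.mul cv').integrable_of_hasCompactSupport h2)
    ((cu.mul cv).integrable_of_hasCompactSupport h3)
    (fun x _ => (hu.differentiable (by norm_num)) x)
    (fun x _ => (hv.differentiable (by norm_num)) x)

lemma green2 {u v : R2 → ℝ} (hu : ContDiff ℝ 2 u) (hv : ContDiff ℝ 2 v)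
    (hs : HasCompactSupport u) (i : Fin 2) :
    ∫ x, u x * Dd i (Dd i v) x = ∫ x, v x * Dd i (Dd i u) x := by
  rw [green1 (hu.of_le (by norm_num)) (Dd_contDiff hv i) (Or.inl hs),
    green1 (Dd_contDiff hu i) (hv.of_le (by norm_num)) (Or.inl (Dd_supp hs i)), neg_neg]
  simp_rw [mul_comm]

lemma green {u v : R2 → ℝ} (hu : ContDiff ℝ 2 u) (hv : ContDiff ℝ 2 v)
    (hs : HasCompactSupport u) :
    ∫ x, u x * lap v x = ∫ x, v x * lap u x := by
  simp_rw [lap_eq, mul_add]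
  have a : ∀ i, Integrable fun x => u x * Dd i (Dd i v) x := fun i =>
    (hu.continuous.mul (Dd_cont (Dd_contDiff hv i) i)).integrable_of_hasCompactSupport hs.mul_right
  have b : ∀ i, Integrable fun x => v x * Dd i (Dd i u) x := fun i =>
    (hv.continuous.mul (Dd_cont (Dd_contDiff hu i) i)).integrable_of_hasCompactSupport
      (Dd_supp (Dd_supp hs i) i).mul_left
  rw [integral_add (a 0) (a 1), integral_add (b 0) (b 1), green2 hu hv hs, green2 hu hv hs]

lemma Dd_mul {u v : R2 → ℝ} (hu : ContDiff ℝ 1 u) (hv : ContDiff ℝ 1 v) (i : Fin 2) :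
    Dd i (fun x => u x * v x) = fun x => u x * Dd i v x + v x * Dd i u x := by
  funext x
  unfold Dd
  rw [fderiv_fun_mul (hu.differentiable (by norm_num) x) (hv.differentiable (by norm_num) x)]
  simp

lemma Dd_add {u v : R2 → ℝ} (hu : ContDiff ℝ 1 u) (hv : ContDiff ℝ 1 v) (i : Fin 2) :
    Dd i (fun x => u x + v x) = fun x => Dd i u x + Dd i v x := by
  funext x
  unfold Dd
  rw [fderiv_fun_add (hu.differentiable (by norm_num) x) (hv.differentiable (by norm_num) x)]
  simp

lemma Dd2_mul {u v : R2 → ℝ} (hu : ContDiff ℝ 2 u) (hv : ContDiff ℝ 2 v) (i : Fin 2) (x : R2) :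
    Dd i (Dd i (fun x => u x * v x)) x =
      u x * Dd i (Dd i v) x + 2 * (Dd i u x * Dd i v x) + v x * Dd i (Dd i u) x := by
  have hu1 : ContDiff ℝ 1 u := hu.of_le (by norm_num)
  have hv1 : ContDiff ℝ 1 v := hv.of_le (by norm_num)
  rw [Dd_mul hu1 hv1, Dd_add (hu1.mul (Dd_contDiff hv i)) (hv1.mul (Dd_contDiff hu i)),
    Dd_mul hu1 (Dd_contDiff hv i), Dd_mul hv1 (Dd_contDiff hu i)]
  ring

lemma lap_mul {u v : R2 → ℝ} (hu : ContDiff ℝ 2 u) (hv : ContDiff ℝ 2 v) (x : R2) :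
    lap (fun x => u x * v x) x =
      u x * lap v x + 2 * (Dd 0 u x * Dd 0 v x + Dd 1 u x * Dd 1 v x) + v x * lap u x := by
  simp only [lap_eq, Dd2_mul hu hv]; ring

lemma Dd_scale (f : R2 → ℝ) (c : ℝ) (i : Fin 2) :
    Dd i (fun x => f (c • x)) = fun x => c * Dd i f (c • x) := by
  funext x
  unfold Dd
  rw [fderiv_comp_smul]
  simp

lemma Dd_const_mul {f : R2 → ℝ} (hf : ContDiff ℝ 1 f) (c : ℝ) (i : Fin 2) :
    Dd i (fun x => c * f x) = fun x => c * Dd i f x := by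
  funext x
  unfold Dd
  rw [fderiv_const_mul (hf.differentiable (by norm_num) x)]
  simp

lemma lap_scale {f : R2 → ℝ} (hf : ContDiff ℝ 2 f) (c : ℝ) (x : R2) :
    lap (fun x => f (c • x)) x = c ^ 2 * lap f (c • x) := by
  have h : ∀ i, ContDiff ℝ 1 fun x : R2 => Dd i f (c • x) := fun i =>
    (Dd_contDiff hf i).comp (contDiff_const_smul c)
  simp only [lap_eq, Dd_scale, Dd_const_mul (h _)]
  ring

/-- scale sequence -/
def cs (n : ℕ) : ℝ := ((n : ℝ) + 1)⁻¹

lemma cs_pos (n : ℕ) : 0 < cs n := by unfold cs; positivity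

lemma cs_tendsto : Tendsto cs atTop (𝓝 0) := by
  unfold cs
  simpa [one_div] using tendsto_one_div_add_atTop_nhds_zero_nat (𝕜 := ℝ)

lemma cs_smul (x : R2) : Tendsto (fun n => cs n • x) atTop (𝓝 0) := by
  simpa using cs_tendsto.smul_const x

lemma lim_cut {f χ : R2 → ℝ} (hf : Integrable f) (hc : Continuous χ) (h0 : χ 0 = 1)
    (hb : ∀ x, |χ x| ≤ 1) :
    Tendsto (fun n => ∫ x, f x * χ (cs n • x)) atTop (𝓝 (∫ x, f x)) := by
  refine tendsto_integral_of_dominated_convergence (fun x => ‖f x‖) ?_ hf.norm ?_ ?_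
  · intro n
    exact hf.aestronglyMeasurable.mul (by fun_prop)
  · intro n
    refine Eventually.of_forall fun x => ?_
    rw [norm_mul]
    exact mul_le_of_le_one_right (norm_nonneg _) (hb _)
  · refine Eventually.of_forall fun x => ?_
    have := ((hc.tendsto 0).comp (cs_smul x)).const_mul (f x)
    simpa [h0] using this

lemma lim_bdd {f g : R2 → ℝ} (hf : Integrable f) (hc : Continuous g) (M : ℝ)
    (hb : ∀ x, |g x| ≤ M) :
    Tendsto (fun n => ∫ x, f x * (cs n ^ 2 * g (cs n • x))) atTop (𝓝 0) := by
  have h1 : Tendsto (fun n => ∫ x, f x * g (cs n • x)) atTop (𝓝 (∫ x, f x * g 0)) := by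
    refine tendsto_integral_of_dominated_convergence (fun x => ‖f x‖ * M) ?_
      (hf.norm.mul_const M) ?_ ?_
    · intro n
      exact hf.aestronglyMeasurable.mul (by fun_prop)
    · intro n
      refine Eventually.of_forall fun x => ?_
      rw [norm_mul]
      gcongr
      exact hb _
    · refine Eventually.of_forall fun x => ?_
      exact ((hc.tendsto 0).comp (cs_smul x)).const_mul (f x)
  have h2 := (cs_tendsto.pow 2).mul h1
  simp only [ne_eq, OfNat.ofNat_ne_zero, not_false_eq_true, zero_pow, zero_mul] at h2
  refine h2.congr fun n => ?_
  rw [← integral_const_mul]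
  congr 1; funext x; ring

lemma lim_grad {f g : R2 → ℝ} (hfc : Continuous f) (hf : Integrable fun x => f x ^ 2)
    (hc : Continuous g) (hs : HasCompactSupport g) (hz : ∀ x, ‖x‖ < 1 → g x = 0) :
    Tendsto (fun n => ∫ x, f x * (cs n * g (cs n • x))) atTop (𝓝 0) := by
  set S : ℕ → Set R2 := fun n => {x | 1 ≤ ‖cs n • x‖}
  have hSm : ∀ n, MeasurableSet (S n) := fun n =>
    measurableSet_le measurable_const (by fun_prop)
  have hA : Tendsto (fun n => ∫ x, (S n).indicator (fun x => f x ^ 2) x) atTop (𝓝 0) := by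
    have : (0:ℝ) = ∫ x : R2, (0:ℝ) := by simp
    rw [this]
    refine tendsto_integral_of_dominated_convergence (fun x => f x ^ 2) ?_ hf ?_ ?_
    · intro n
      exact hf.aestronglyMeasurable.indicator (hSm n)
    · intro n
      refine Eventually.of_forall fun x => ?_
      refine (norm_indicator_le_norm_self _ _).trans ?_
      rw [Real.norm_of_nonneg (sq_nonneg _)]
    · refine Eventually.of_forall fun x => ?_
      have hx : Tendsto (fun n => ‖cs n • x‖) atTop (𝓝 0) := by
        simpa using (cs_smul x).norm
      refine tendsto_const_nhds.congr' ?_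
      filter_upwards [hx.eventually (gt_mem_nhds one_pos)] with n hn
      rw [indicator_of_notMem]
      simpa [S] using hn
  set G := ∫ x, g x ^ 2 with hG
  have hG0 : 0 ≤ G := integral_nonneg fun x => sq_nonneg _
  have hg2 : Integrable fun x => g x ^ 2 := by
    refine (hc.pow 2).integrable_of_hasCompactSupport ?_
    simp_rw [pow_two]
    exact hs.mul_right
  have hscale : ∀ n, ∫ x, (cs n * g (cs n • x)) ^ 2 = G := by
    intro n
    simp_rw [mul_pow]
    rw [integral_const_mul, Measure.integral_comp_smul volume (fun x => g x ^ 2) (cs n)]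
    have hcp := cs_pos n
    rw [finrank_euclideanSpace, Fintype.card_fin, abs_of_pos (by positivity), smul_eq_mul,
      ← mul_assoc, mul_inv_cancel₀ (by positivity), one_mul]
  have hscI : ∀ n, Integrable fun x => (cs n * g (cs n • x)) ^ 2 := by
    intro n
    simp_rw [mul_pow]
    exact (hg2.comp_smul (cs_pos n).ne').const_mul _
  have hbound : ∀ ε > 0, ∀ n, ‖∫ x, f x * (cs n * g (cs n • x))‖ ≤
      ε⁻¹ * (∫ x, (S n).indicator (fun x => f x ^ 2) x) + ε * G := by
    intro ε hε n
    rw [← hscale n, ← integral_const_mul, ← integral_const_mul, ← integral_add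
      ((hf.indicator (hSm n)).const_mul _) ((hscI n).const_mul _)]
    refine norm_integral_le_of_norm_le
      (((hf.indicator (hSm n)).const_mul _).add ((hscI n).const_mul _))
      (Eventually.of_forall fun x => ?_)
    by_cases hx : x ∈ S n
    · simp only [Pi.add_apply, indicator_of_mem hx]
      set b := cs n * g (cs n • x)
      rw [Real.norm_eq_abs, abs_le]
      have e1 : ε⁻¹ * f x ^ 2 + ε * b ^ 2 - 2 * (f x * b) = ε⁻¹ * (f x - ε * b) ^ 2 := by
        field_simp; ring
      have e2 : ε⁻¹ * f x ^ 2 + ε * b ^ 2 + 2 * (f x * b) = ε⁻¹ * (f x + ε * b) ^ 2 := by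
        field_simp; ring
      have p1 : 0 ≤ ε⁻¹ * (f x - ε * b) ^ 2 := by positivity
      have p2 : 0 ≤ ε⁻¹ * (f x + ε * b) ^ 2 := by positivity
      have p3 : 0 ≤ ε⁻¹ * f x ^ 2 + ε * b ^ 2 := by positivity
      constructor <;> linarith
    · have : g (cs n • x) = 0 := hz _ (by simpa [S] using hx)
      simp [this, indicator_of_notMem hx]
  rw [Metric.tendsto_atTop]
  intro δ hδ
  set ε := δ / (2 * (G + 1)) with hε
  have hεp : 0 < ε := by positivity
  have h1 : ε * G < δ / 2 := by
    have : ε * (G + 1) = δ / 2 := by rw [hε]; field_simp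
    nlinarith
  have h2 : Tendsto (fun n => ε⁻¹ * ∫ x, (S n).indicator (fun x => f x ^ 2) x) atTop (𝓝 0) := by
    simpa using hA.const_mul ε⁻¹
  obtain ⟨N, hN⟩ := eventually_atTop.mp (h2.eventually (gt_mem_nhds (half_pos hδ)))
  refine ⟨N, fun n hn => ?_⟩
  rw [dist_zero_right]
  have := hbound ε hεp n
  have := hN n hn
  linarith

lemma main_green (w ψ : R2 → ℝ) (hw : ContDiff ℝ 2 w) (hψ : ContDiff ℝ 2 ψ)
    (hg : Integrable fun x => ‖gradient w x‖ ^ 2) (hb : BddFun ψ)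
    (hi : Integrable fun x => w x * ψ x)
    (h1 : Integrable fun x => w x * lap ψ x) (h2 : Integrable fun x => ψ x * lap w x) :
    ∫ x, w x * lap ψ x = ∫ x, ψ x * lap w x := by
  obtain ⟨M, hM⟩ := hb
  let B : ContDiffBump (0 : R2) := ⟨1, 2, by norm_num, by norm_num⟩
  let χ : R2 → ℝ := fun x => B x
  have χs : ContDiff ℝ 2 χ := B.contDiff
  have χc : HasCompactSupport χ := B.hasCompactSupport
  have χ0 : χ 0 = 1 := B.one_of_mem_closedBall (by simp [B])
  have χb : ∀ x, |χ x| ≤ 1 := fun x => by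
    rw [abs_of_nonneg B.nonneg]; exact B.le_one
  have χz : ∀ i, ∀ x : R2, ‖x‖ < 1 → Dd i χ x = 0 := by
    intro i x hx
    have : χ =ᶠ[𝓝 x] fun _ => 1 :=
      B.eventuallyEq_one_of_mem_ball (by simpa [B] using hx)
    unfold Dd
    rw [this.fderiv_eq]; simp
  have lapc : Continuous (lap χ) := by
    have : lap χ = fun x => Dd 0 (Dd 0 χ) x + Dd 1 (Dd 1 χ) x := funext (lap_eq χ)
    rw [this]
    exact (Dd_cont (Dd_contDiff χs 0) 0).add (Dd_cont (Dd_contDiff χs 1) 1)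
  have laps : HasCompactSupport (lap χ) := by
    have : lap χ = fun x => Dd 0 (Dd 0 χ) x + Dd 1 (Dd 1 χ) x := funext (lap_eq χ)
    rw [this]
    exact (Dd_supp (Dd_supp χc 0) 0).add (Dd_supp (Dd_supp χc 1) 1)
  obtain ⟨K, hK⟩ := lapc.bounded_above_of_compact_support laps
  have hDw : ∀ i, Integrable fun x => (ψ x * Dd i w x) ^ 2 := by
    intro i
    have := (Dd_contDiff hw i).continuous
    have := hψ.continuous
    refine Integrable.mono' (hg.const_mul (M ^ 2)) (by fun_prop) (Eventually.of_forall fun x => ?_)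
    rw [Real.norm_of_nonneg (sq_nonneg _), mul_pow]
    have hD : |Dd i w x| ≤ ‖gradient w x‖ := by
      have hh := (fderiv ℝ w x).le_opNorm (EuclideanSpace.single i 1)
      have hn : ‖gradient w x‖ = ‖fderiv ℝ w x‖ := by simp [gradient]
      rw [hn]
      simpa [Dd] using hh
    have hm : |ψ x| ≤ M := hM x
    have e1 : ψ x ^ 2 ≤ M ^ 2 := by
      rw [← sq_abs (ψ x)]; gcongr
    have e2 : Dd i w x ^ 2 ≤ ‖gradient w x‖ ^ 2 := by
      rw [← sq_abs (Dd i w x)]; gcongr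
    gcongr
  have T1 := lim_cut h1 χs.continuous χ0 χb
  have T2 := lim_cut h2 χs.continuous χ0 χb
  have T3 := lim_bdd hi lapc K hK
  have T4 : ∀ i, _ := fun i => lim_grad (hψ.continuous.mul (Dd_contDiff hw i).continuous) (hDw i)
    (Dd_contDiff χs i).continuous (Dd_supp χc i) (χz i)
  have hE : ∀ n, ∫ x, w x * lap ψ x * χ (cs n • x) =
      (∫ x, w x * ψ x * (cs n ^ 2 * lap χ (cs n • x))) +
      2 * (∫ x, ψ x * Dd 0 w x * (cs n * Dd 0 χ (cs n • x))) +
      2 * (∫ x, ψ x * Dd 1 w x * (cs n * Dd 1 χ (cs n • x))) +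
      ∫ x, ψ x * lap w x * χ (cs n • x) := by
    intro n
    have ηs : ContDiff ℝ 2 fun x : R2 => χ (cs n • x) := χs.comp (contDiff_const_smul _)
    have sc : ∀ {F : R2 → ℝ}, HasCompactSupport F → HasCompactSupport fun x => F (cs n • x) :=
      fun hF => hF.comp_smul (cs_pos n).ne'
    have hgr := green (hw.mul ηs) hψ ((sc χc).mul_left)
    have hl : ∀ x, w x * lap ψ x * χ (cs n • x) = w x * χ (cs n • x) * lap ψ x := fun x => by ring
    simp_rw [hl]
    refine hgr.trans ?_
    have i1 : Integrable fun x => w x * ψ x * (cs n ^ 2 * lap χ (cs n • x)) := by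
      refine Continuous.integrable_of_hasCompactSupport ?_ ((sc laps).mul_left.mul_left)
      have := hw.continuous
      have := hψ.continuous
      fun_prop
    have i2 : ∀ i, Integrable fun x => ψ x * Dd i w x * (cs n * Dd i χ (cs n • x)) := by
      intro i
      refine Continuous.integrable_of_hasCompactSupport ?_ ((sc (Dd_supp χc i)).mul_left.mul_left)
      have := (Dd_contDiff hw i).continuous
      have := (Dd_contDiff χs i).continuous
      have := hψ.continuous
      fun_prop
    have i3 : Integrable fun x => ψ x * lap w x * χ (cs n • x) := by
      refine h2.mul_bdd (c := 1) ?_ (Eventually.of_forall fun x => χb _)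
      have := χs.continuous
      fun_prop
    have k1 := integral_add i1 ((i2 0).const_mul 2)
    have k2 := integral_add (i1.add ((i2 0).const_mul 2)) ((i2 1).const_mul 2)
    have k3 := integral_add ((i1.add ((i2 0).const_mul 2)).add ((i2 1).const_mul 2)) i3
    simp only [Pi.add_apply] at k1 k2 k3
    rw [← integral_const_mul, ← integral_const_mul, ← k1, ← k2, ← k3]
    congr 1
    funext x
    rw [lap_mul hw ηs, lap_scale χs, Dd_scale, Dd_scale]
    ring
  have T5 := ((T3.add ((T4 0).const_mul 2)).add ((T4 1).const_mul 2)).add T2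
  simp only [mul_zero, zero_add] at T5
  exact tendsto_nhds_unique T1 (T5.congr fun n => (hE n).symm)

/-- identity (A.16): `∫ w³ψ₁ = (p+1)/p`. -/
theorem cubic_orthogonality_identity
    (w h : R2 → ℝ) (p : ℝ) (y0 : R2)
    (hw : IsGroundState w) (hp : 2 ≤ p)
    (hsmooth : ContDiff ℝ 2 h)
    (hnonneg : ∀ x, 0 ≤ h x) (hhom : Homog h p)
    (hcrit : gradient (Hfun h w) y0 = 0)
    (huniq : ∀ y, gradient (Hfun h w) y = 0 → y = y0)
    -- `ψ₁`: the unique bounded solution of `∇ψ₁(0)=0`,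
    -- `Lψ₁ = -2w³/∫w⁴ - 2h(·+y₀)w/(p∫h(·+y₀)w²)`
    (ψ1 : R2 → ℝ)
    (hψ1s : ContDiff ℝ 2 ψ1) (hψ1b : BddFun ψ1) (hψ1g : gradient ψ1 0 = 0)
    (hψ1e : ∀ x, Lop w ψ1 x =
      -(2 * (w x) ^ 3 / (∫ z, (w z) ^ 4)) - 2 * h (x + y0) * w x / (p * Hfun h w y0))
    (hint1 : Integrable fun x => (w x) ^ 3 * ψ1 x)
    (hint2 : Integrable fun x => w x * ψ1 x)
    (hint3 : Integrable fun x => ⟪gradient ψ1 x, gradient w x⟫) :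
    (∫ x, (w x) ^ 3 * ψ1 x) = (p + 1) / p := by
  obtain ⟨hI, hH⟩ := aux_H w h p y0 hw hp hsmooth.continuous hnonneg hhom huniq
  have hp0 : p ≠ 0 := by linarith
  set Q := ∫ z, (w z) ^ 4 with hQ
  have hQ0 : Q ≠ 0 := by
    refine ne_of_gt (integral_pos_of_integrable_nonneg_nonzero (x := 0)
      (hw.smooth.continuous.pow 4) hw.quarticInt (fun x => by positivity) ?_)
    exact pow_ne_zero _ (hw.pos _).ne'
  have e1 : ∀ x, w x * lap ψ1 x = w x * ψ1 x - 3 * (w x ^ 3 * ψ1 x) + 2 / Q * w x ^ 4 +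
      2 / (p * Hfun h w y0) * (h (x + y0) * w x ^ 2) := by
    intro x
    have := hψ1e x
    unfold Lop at this
    have h3 : lap ψ1 x = (1 - 3 * w x ^ 2) * ψ1 x + 2 * (w x) ^ 3 / Q +
      2 * h (x + y0) * w x / (p * Hfun h w y0) := by linarith
    rw [h3]; ring
  have e2 : ∀ x, ψ1 x * lap w x = w x * ψ1 x - w x ^ 3 * ψ1 x := by
    intro x
    have h3 : lap w x = w x - w x ^ 3 := by linarith [hw.eqn x]
    rw [h3]; ring
  have j1 := hint1.const_mul 3
  have j2 := hw.quarticInt.const_mul (2 / Q)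
  have j3 := hI.const_mul (2 / (p * Hfun h w y0))
  have key := main_green w ψ1 hw.smooth hψ1s hw.gradSqInt hψ1b hint2
    (by simp_rw [e1]; exact ((hint2.sub j1).add j2).add j3)
    (by simp_rw [e2]; exact hint2.sub hint1)
  simp_rw [e1, e2] at key
  have k1 := integral_add ((hint2.sub j1).add j2) j3
  have k2 := integral_add (hint2.sub j1) j2
  have k3 := integral_sub hint2 j1
  have k4 := integral_sub hint2 hint1
  simp only [Pi.add_apply, Pi.sub_apply] at k1 k2 k3 k4
  rw [k1, k2, k3, k4, integral_const_mul, integral_const_mul, integral_const_mul, ← hQ] at key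
  have hHd : ∫ x, h (x + y0) * w x ^ 2 = Hfun h w y0 := rfl
  rw [hHd] at key
  have a1 : 2 / Q * Q = 2 := by field_simp
  have a2 : 2 / (p * Hfun h w y0) * Hfun h w y0 = 2 / p := by field_simp
  rw [a1, a2] at key
  have a3 : (p + 1) / p = 1 + 1 / p := by field_simp
  have a4 : 2 / p = 2 * (1 / p) := by ring
  rw [a3]
  linarith
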